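/- For all sufficiently large n ∈ ℕ, e^{h(g_A)·n} ≤ Per_n(g_A) ≤ 2e^{h(g_A)·n}, where h(g_A) = log λ; equivalently, λ^n ≤ Per_n(g_A) ≤ 2λ^n for all sufficiently large n. -/

import Mathlib

open Matrix

/-- The 2-torus ℝ²/ℤ². -/
abbrev Torus : Type := AddCircle (1:ℝ) × AddCircle (1:ℝ)

/-- The quotient map ℝ² → 𝕋². -/
noncomputable def torusMk (v : ℝ × ℝ) : Torus := (↑v.1, ↑v.2)

/-- The linear action of an integer matrix `A ∈ SL(2,ℤ)` on ℝ². -/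
noncomputable def matAct (A : Matrix.SpecialLinearGroup (Fin 2) ℤ) (v : ℝ × ℝ) : ℝ × ℝ :=
  ((A.1 0 0 : ℤ) * v.1 + (A.1 0 1 : ℤ) * v.2,
   (A.1 1 0 : ℤ) * v.1 + (A.1 1 1 : ℤ) * v.2)

theorem card_quot_range (B : Matrix (Fin 2) (Fin 2) ℤ) (hB : B.det ≠ 0) :
    Nat.card ((Fin 2 → ℤ) ⧸ LinearMap.range (Matrix.toLin' B)) = B.det.natAbs := by
  have hinj : Function.Injective (Matrix.toLin' B) := by
    intro x y h
    have h' : B *ᵥ (x - y) = 0 := by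
      rw [Matrix.mulVec_sub, sub_eq_zero]; simpa using h
    exact sub_eq_zero.1 (Matrix.eq_zero_of_mulVec_eq_zero hB h')
  rw [← Submodule.natAbs_det_equiv _ (LinearEquiv.ofInjective (Matrix.toLin' B) hinj)]
  rw [← LinearMap.det_toLin']
  congr 2

/-- the map `m ↦ B⁻¹ m mod ℤ²` -/
noncomputable def phiB (B : Matrix (Fin 2) (Fin 2) ℤ) : (Fin 2 → ℤ) →+ Torus where
  toFun m := torusMk (((B 1 1 : ℝ) * m 0 - B 0 1 * m 1) / B.det,
    (-(B 1 0 : ℝ) * m 0 + B 0 0 * m 1) / B.det)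
  map_zero' := by simp [torusMk]
  map_add' x y := by
    simp only [torusMk, Prod.mk_add_mk, ← AddCircle.coe_add, Pi.add_apply, Int.cast_add]
    congr 2 <;> ring

theorem circle_zero (x : ℝ) : (x : AddCircle (1:ℝ)) = 0 ↔ ∃ n : ℤ, (n : ℝ) = x := by
  rw [AddCircle.coe_eq_zero_iff]; simp

theorem torusMk_surj (x : Torus) : ∃ v, torusMk v = x := by
  obtain ⟨x, y⟩ := x
  obtain ⟨a, rfl⟩ := QuotientAddGroup.mk_surjective x
  obtain ⟨b, rfl⟩ := QuotientAddGroup.mk_surjective y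
  exact ⟨(a, b), rfl⟩

theorem torusMk_zero (a b : ℝ) : torusMk (a, b) = 0 ↔ (∃ n : ℤ, (n : ℝ) = a) ∧ ∃ n : ℤ, (n : ℝ) = b := by
  rw [← circle_zero, ← circle_zero]
  simp [torusMk, Prod.ext_iff]

/-- the action of an integer matrix on the torus -/
noncomputable def tAct (B : Matrix (Fin 2) (Fin 2) ℤ) (x : Torus) : Torus :=
  (B 0 0 • x.1 + B 0 1 • x.2, B 1 0 • x.1 + B 1 1 • x.2)

theorem tAct_mk (B : Matrix (Fin 2) (Fin 2) ℤ) (v : ℝ × ℝ) :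
    tAct B (torusMk v) = torusMk (B 0 0 * v.1 + B 0 1 * v.2, B 1 0 * v.1 + B 1 1 * v.2) := by
  simp [tAct, torusMk, ← zsmul_eq_mul]

theorem tAct_mul (B C : Matrix (Fin 2) (Fin 2) ℤ) (x : Torus) :
    tAct (B * C) x = tAct B (tAct C x) := by
  obtain ⟨v, rfl⟩ := torusMk_surj x
  simp only [tAct_mk, Matrix.mul_apply, Fin.sum_univ_two]
  congr 2 <;> push_cast <;> ring

theorem card_ker (B : Matrix (Fin 2) (Fin 2) ℤ) (hB : B.det ≠ 0) :
    Nat.card {x : Torus | tAct B x = 0} = B.det.natAbs := by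
  have hdet : (B.det : ℝ) = B 0 0 * B 1 1 - B 0 1 * B 1 0 := by
    rw [Matrix.det_fin_two]; push_cast; ring
  have hB' : (B.det : ℝ) ≠ 0 := by exact_mod_cast hB
  have h1 : {x : Torus | tAct B x = 0} = ((phiB B).range : Set Torus) := by
    ext x
    simp only [Set.mem_ofPred_eq, SetLike.mem_coe, AddMonoidHom.mem_range]
    constructor
    · intro hx
      obtain ⟨v, rfl⟩ := torusMk_surj x
      rw [tAct_mk, torusMk_zero] at hx
      obtain ⟨⟨m, hm⟩, n, hn⟩ := hx
      refine ⟨![m, n], ?_⟩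
      change torusMk _ = _
      congr 1
      simp only [Matrix.cons_val_zero, Matrix.cons_val_one, hm, hn]
      ext
      · simp only; rw [div_eq_iff hB', hdet]; ring
      · simp only; rw [div_eq_iff hB', hdet]; ring
    · rintro ⟨m, rfl⟩
      change tAct B (torusMk _) = 0
      rw [tAct_mk, torusMk_zero]
      refine ⟨⟨m 0, ?_⟩, m 1, ?_⟩
      · simp only; field_simp; rw [hdet]; ring
      · simp only; field_simp; rw [hdet]; ring
  have h2 : (phiB B).ker = (LinearMap.range (Matrix.toLin' B)).toAddSubgroup := by
    ext m
    simp only [AddMonoidHom.mem_ker, Submodule.mem_toAddSubgroup, LinearMap.mem_range,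
      Matrix.toLin'_apply]
    change torusMk _ = 0 ↔ _
    rw [torusMk_zero]
    constructor
    · rintro ⟨⟨p, hp⟩, q, hq⟩
      rw [eq_div_iff hB', hdet] at hp hq
      refine ⟨![p, q], ?_⟩
      have e0 : (B.det : ℝ) * (B 0 0 * p + B 0 1 * q) = B.det * m 0 := by
        rw [hdet]; linear_combination (B 0 0 : ℝ) * hp + B 0 1 * hq
      have e1 : (B.det : ℝ) * (B 1 0 * p + B 1 1 * q) = B.det * m 1 := by
        rw [hdet]; linear_combination (B 1 0 : ℝ) * hp + B 1 1 * hq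
      have e0' := mul_left_cancel₀ hB' e0
      have e1' := mul_left_cancel₀ hB' e1
      ext i
      fin_cases i
      · simp [Matrix.mulVec, dotProduct, Fin.sum_univ_two]; exact_mod_cast e0'
      · simp [Matrix.mulVec, dotProduct, Fin.sum_univ_two]; exact_mod_cast e1'
    · rintro ⟨w, rfl⟩
      refine ⟨⟨w 0, ?_⟩, w 1, ?_⟩
      · rw [eq_div_iff hB', hdet]
        simp [Matrix.mulVec, dotProduct, Fin.sum_univ_two]; ring
      · rw [eq_div_iff hB', hdet]
        simp [Matrix.mulVec, dotProduct, Fin.sum_univ_two]; ring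
  rw [h1, ← card_quot_range B hB]
  have := AddSubgroup.index_ker (phiB B)
  rw [h2] at this
  exact this.symm

theorem two_to_one {X Y : Type*} (π : X → Y) (Q : Set (X × Bool)) (P : Set Y)
    (hfin : Q.Finite)
    (hmap : ∀ q ∈ Q, π q.1 ∈ P)
    (hfib : ∀ y ∈ P, ∃ a b, a ≠ b ∧ {q ∈ Q | π q.1 = y} = {a, b}) :
    Q.ncard = 2 * P.ncard := by
  classical
  have hPfin : P.Finite := by
    refine (hfin.image (fun q => π q.1)).subset ?_
    intro y hy
    obtain ⟨a, b, -, h⟩ := hfib y hy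
    have : a ∈ {q ∈ Q | π q.1 = y} := by rw [h]; simp
    exact ⟨a, this.1, this.2⟩
  rw [Set.ncard_eq_toFinset_card Q hfin, Set.ncard_eq_toFinset_card P hPfin,
    Finset.card_eq_sum_card_fiberwise (f := fun q => π q.1) (t := hPfin.toFinset)]
  · rw [Finset.sum_const_nat (m := 2), mul_comm]
    intro y hy
    obtain ⟨a, b, hab, h⟩ := hfib y (by simpa using hy)
    rw [← Finset.card_pair hab]
    congr 1
    ext q
    have := Set.ext_iff.1 h q
    simpa using this
  · intro q hq
    have := hmap q (by simpa using hq)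
    simpa using this

theorem tr_pow (A : Matrix (Fin 2) (Fin 2) ℤ) (hA : A.det = 1) (lam : ℝ) (h0 : lam ≠ 0)
    (htr : (A 0 0 : ℝ) + (A 1 1 : ℝ) = lam + lam⁻¹) (n : ℕ) :
    ((A ^ n) 0 0 : ℝ) + ((A ^ n) 1 1 : ℝ) = lam ^ n + (lam ^ n)⁻¹ := by
  have hCH : ∀ n, A ^ (n + 2) = (A 0 0 + A 1 1) • A ^ (n + 1) - A ^ n := by
    intro n
    have : A ^ 2 = (A 0 0 + A 1 1) • A - 1 := by
      rw [Matrix.det_fin_two] at hA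
      ext i j
      fin_cases i <;> fin_cases j <;> simp [pow_two, Matrix.mul_apply, Fin.sum_univ_two, -zsmul_eq_mul] <;> linarith
    rw [pow_add, this, mul_sub, mul_one, mul_smul_comm, pow_succ]
  induction n using Nat.twoStepInduction with
  | zero => simp
  | one => simpa using htr
  | more n ih1 ih2 =>
    rw [hCH]
    simp only [Matrix.sub_apply, Matrix.smul_apply, smul_eq_mul]
    push_cast
    rw [htr]
    have : (lam + lam⁻¹) * (lam ^ (n+1) + (lam ^ (n+1))⁻¹) - (lam ^ n + (lam ^ n)⁻¹)
      = lam ^ (n + 2) + (lam ^ (n + 2))⁻¹ := by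
      field_simp; ring
    rw [← this, ← ih1, ← ih2]; ring

open Filter in
/-- for all sufficiently large `n`,
`e^{h(g_A)·n} = λ^n ≤ Per_n(g_A) ≤ 2λ^n = 2e^{h(g_A)·n}` (with `h(g_A) = log λ`). -/
theorem periodic_points_quotient_bounds
    (A : Matrix.SpecialLinearGroup (Fin 2) ℤ)
    (lam : ℝ) (hlam : 1 < lam)
    (htr : ((A.1 0 0 : ℤ) : ℝ) + ((A.1 1 1 : ℤ) : ℝ) = lam + lam⁻¹)
    (fA : Torus ≃ₜ Torus)
    (hfA : ∀ v : ℝ × ℝ, fA (torusMk v) = torusMk (matAct A v))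
    (S2 : Type) [MetricSpace S2] [CompactSpace S2]
    (π : Torus → S2) (hπcont : Continuous π) (hπsurj : Function.Surjective π)
    (hπ : ∀ x y : Torus, π x = π y ↔ (x = y ∨ x = -y))
    (gA : S2 ≃ₜ S2) (hgA : ∀ x : Torus, gA (π x) = π (fA x)) :
    ∀ᶠ n : ℕ in atTop,
      lam ^ n ≤ (Nat.card {y : S2 | gA^[n] y = y} : ℝ) ∧
      (Nat.card {y : S2 | gA^[n] y = y} : ℝ) ≤ 2 * lam ^ n := by
  have hf1 : ∀ x, fA x = tAct A.1 x := by
    intro x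
    obtain ⟨v, rfl⟩ := torusMk_surj x
    rw [hfA, tAct_mk]; rfl
  have hfn : ∀ (n : ℕ) x, fA^[n] x = tAct (A.1 ^ n) x := by
    intro n
    induction n with
    | zero => intro x; simp [tAct]
    | succ n ih =>
      intro x
      rw [Function.iterate_succ_apply', ih, hf1, pow_succ', tAct_mul]
  have hgn : ∀ (n : ℕ) x, gA^[n] (π x) = π (fA^[n] x) := by
    intro n
    induction n with
    | zero => intro x; rfl
    | succ n ih =>
      intro x
      rw [Function.iterate_succ_apply', ih, hgA, Function.iterate_succ_apply']
  have key : ∀ n : ℕ, 1 ≤ n →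
      (Nat.card {y : S2 | gA^[n] y = y} : ℝ) = lam ^ n + (lam ^ n)⁻¹ := by
    intro n hn
    have hl : 1 < lam ^ n := one_lt_pow₀ hlam (by omega)
    have htrn := tr_pow A.1 A.2 lam (by positivity) htr n
    have hdetn : (A.1 ^ n).det = 1 := by rw [Matrix.det_pow, A.2, one_pow]
    set M := A.1 ^ n with hM
    have hd1 : (M - 1).det = 2 - (M 0 0 + M 1 1) := by
      rw [Matrix.det_fin_two] at hdetn ⊢
      simp; linarith
    have hd2 : (M + 1).det = 2 + (M 0 0 + M 1 1) := by
      rw [Matrix.det_fin_two] at hdetn ⊢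
      simp; linarith
    have hgt : (2 : ℝ) < lam ^ n + (lam ^ n)⁻¹ := by
      have : 0 < (lam ^ n - 1) ^ 2 / lam ^ n := by
        have : 0 < lam ^ n - 1 := by linarith
        positivity
      have e : (lam ^ n - 1) ^ 2 / lam ^ n = lam ^ n + (lam ^ n)⁻¹ - 2 := by
        field_simp; ring
      linarith
    have hgtZ : 2 < M 0 0 + M 1 1 := by
      rw [← htrn] at hgt; exact_mod_cast hgt
    have hk1 := card_ker (M - 1) (by rw [hd1]; omega)
    have hk2 := card_ker (M + 1) (by rw [hd2]; omega)
    have hs1 : {x : Torus | tAct (M - 1) x = 0} = {x | fA^[n] x = x} := by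
      ext x
      simp only [Set.mem_ofPred_eq, hfn]
      rw [← hM, ← sub_eq_zero (a := tAct M x) (b := x)]
      have : tAct (M - 1) x = tAct M x - x := by
        ext <;> simp [tAct, sub_smul] <;> abel
      rw [this]
    have hs2 : {x : Torus | tAct (M + 1) x = 0} = {x | fA^[n] x = -x} := by
      ext x
      simp only [Set.mem_ofPred_eq, hfn]
      rw [← hM, ← add_eq_zero_iff_eq_neg (a := tAct M x)]
      have : tAct (M + 1) x = tAct M x + x := by
        ext <;> simp [tAct, add_smul] <;> abel
      rw [this]
    rw [hs1, hd1] at hk1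
    rw [hs2, hd2] at hk2
    have hneg : ∀ x, fA^[n] (-x) = - fA^[n] x := by
      intro x; simp only [hfn]
      ext <;> simp [tAct] <;> abel
    rw [Nat.card_coe_set_eq] at hk1 hk2 ⊢
    have hF1 : {x | fA^[n] x = x}.Finite := Set.finite_of_ncard_pos (by omega)
    have hF2 : {x | fA^[n] x = -x}.Finite := Set.finite_of_ncard_pos (by omega)
    let Q : Set (Torus × Bool) := (fun x => (x, true)) '' {x | fA^[n] x = x} ∪
      (fun x => (x, false)) '' {x | fA^[n] x = -x}
    have hQt : ∀ x, (x, true) ∈ Q ↔ fA^[n] x = x := by intro x; simp [Q]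
    have hQf : ∀ x, (x, false) ∈ Q ↔ fA^[n] x = -x := by intro x; simp [Q]
    have hQfin : Q.Finite := (hF1.image _).union (hF2.image _)
    have hQcard : Q.ncard = {x | fA^[n] x = x}.ncard + {x | fA^[n] x = -x}.ncard := by
      rw [Set.ncard_union_eq _ (hF1.image _) (hF2.image _),
        Set.ncard_image_of_injective _ (fun a b h => (Prod.ext_iff.1 h).1),
        Set.ncard_image_of_injective _ (fun a b h => (Prod.ext_iff.1 h).1)]
      rw [Set.disjoint_left]
      rintro _ ⟨a, -, rfl⟩ ⟨b, -, h⟩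
      simp at h
    have h2 := two_to_one π Q {y : S2 | gA^[n] y = y} hQfin (by
      rintro ⟨x, b⟩ hx
      simp only [Set.mem_ofPred_eq, hgn, hπ]
      cases b
      · exact Or.inr ((hQf x).1 hx)
      · exact Or.inl ((hQt x).1 hx)) (by
      intro y hy
      obtain ⟨x, rfl⟩ := hπsurj y
      simp only [Set.mem_ofPred_eq, hgn, hπ] at hy
      by_cases hx : x = -x
      · have hfx : fA^[n] x = x := by rcases hy with h | h; exact h; rw [h]; exact hx.symm
        refine ⟨(x, true), (x, false), by simp, ?_⟩
        ext ⟨z, b⟩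
        simp only [Set.mem_ofPred_eq, hπ, ← hx, or_self, Set.mem_insert_iff,
          Set.mem_singleton_iff, Prod.mk.injEq]
        cases b
        · rw [hQf]
          constructor
          · rintro ⟨-, h⟩; simp [h]
          · intro h; have : z = x := by simpa using h
            subst this; exact ⟨hfx.trans hx, rfl⟩
        · rw [hQt]
          constructor
          · rintro ⟨-, h⟩; simp [h]
          · intro h; have : z = x := by simpa using h
            subst this; exact ⟨hfx, rfl⟩
      · rcases hy with h | h
        · refine ⟨(x, true), (-x, true), by simpa using hx, ?_⟩
          ext ⟨z, b⟩
          simp only [Set.mem_ofPred_eq, hπ, Set.mem_insert_iff,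
            Set.mem_singleton_iff, Prod.mk.injEq]
          cases b
          · rw [hQf]
            simp only [Bool.false_eq_true, and_false, or_self, iff_false, not_and]
            rintro h1 (rfl | rfl)
            · exact hx (h.symm.trans h1)
            · rw [hneg, h, neg_neg] at h1; exact hx h1.symm
          · rw [hQt]
            simp only [and_true]
            constructor
            · exact fun h => h.2
            · rintro (rfl | rfl)
              · exact ⟨h, Or.inl rfl⟩
              · exact ⟨by rw [hneg, h], Or.inr rfl⟩
        · refine ⟨(x, false), (-x, false), by simpa using hx, ?_⟩
          ext ⟨z, b⟩
          simp only [Set.mem_ofPred_eq, hπ, Set.mem_insert_iff,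
            Set.mem_singleton_iff, Prod.mk.injEq]
          cases b
          · rw [hQf]
            simp only [and_true]
            constructor
            · exact fun h => h.2
            · rintro (rfl | rfl)
              · exact ⟨h, Or.inl rfl⟩
              · exact ⟨by rw [hneg, h], Or.inr rfl⟩
          · rw [hQt]
            simp only [Bool.true_eq_false, and_false, or_self, iff_false, not_and]
            rintro h1 (rfl | rfl)
            · exact hx (h1.symm.trans h)
            · rw [hneg, h, neg_neg] at h1; exact hx h1)
    have h3 : ((({y : S2 | gA^[n] y = y}.ncard : ℕ) : ℤ)) = M 0 0 + M 1 1 := by omega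
    rw [← htrn]
    exact_mod_cast h3
  filter_upwards [eventually_ge_atTop 1] with n hn
  rw [key n hn]
  have hl : 1 ≤ lam ^ n := one_le_pow₀ hlam.le
  have h1 : (lam ^ n)⁻¹ ≤ 1 := inv_le_one_of_one_le₀ hl
  have h2 : 0 < (lam ^ n)⁻¹ := by positivity
  constructor <;> linarith
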